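/- arXiv:2305.10671 — 3 statements merged into one kernel-verified Lean document; each statement's English description precedes it below -/
import Mathlib

section
/- Let $n$ be a positive integer, $q = 2^n$, and $d = q^3 + q^2 + q - 1$. For any $b \in \mu_{q+1} \setminus \{1\}$ (i.e., $b^{q+1} = 1$, $b \neq 1$), the equation $x^d + (x+1)^d = b$ has exactly $q^2 - q$ solutions $x \in \mathbb{F}_{q^4}$. -/
open Polynomial Finset

theorem FiniteField.card_filter_pow_eq_self {K : Type*} [Field K] [Fintype K] [DecidableEq K]
    {m k : ℕ} (hm : 1 < m) (hk : k ≠ 0) (hK : Fintype.card K = m ^ k) :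
    #{x : K | x ^ m = x} = m := by
  have h1 : 1 < m ^ k := Nat.one_lt_pow hk hm
  have hdvd : (X ^ m - X : K[X]) ∣ X ^ (m ^ k) - X := by
    obtain ⟨t, ht⟩ : m - 1 ∣ m ^ k - 1 := by simpa using Nat.sub_dvd_pow_sub_pow m 1 k
    have h := sub_dvd_pow_sub_pow ((X : K[X]) ^ (m - 1)) 1 t
    rw [← pow_mul, ← ht, one_pow] at h
    have e : ∀ N : ℕ, 1 < N → (X ^ N - X : K[X]) = X * (X ^ (N - 1) - 1) := by
      intro N hN
      obtain ⟨j, rfl⟩ := Nat.exists_eq_add_of_lt hN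
      simp only [Nat.add_sub_cancel]
      ring
    rw [e m hm, e _ h1]
    exact mul_dvd_mul_left X h
  have hne : (X ^ (m ^ k) - X : K[X]) ≠ 0 := FiniteField.X_pow_card_sub_X_ne_zero K h1
  have hne' : (X ^ m - X : K[X]) ≠ 0 := FiniteField.X_pow_card_sub_X_ne_zero K hm
  have hroots : (X ^ (m ^ k) - X : K[X]).roots = Finset.univ.val := by
    rw [← hK]; exact FiniteField.roots_X_pow_card_sub_X K
  have hsplit : (X ^ (m ^ k) - X : K[X]).Splits := by
    rw [splits_iff_card_roots, hroots, FiniteField.X_pow_card_sub_X_natDegree_eq K h1, ← hK]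
    rfl
  have hnodup : (X ^ m - X : K[X]).roots.Nodup :=
    Multiset.nodup_of_le (roots.le_of_dvd hne hdvd) (by rw [hroots]; exact Finset.univ.nodup)
  have hcard := splits_iff_card_roots.1 (hsplit.of_dvd hne hdvd)
  rw [FiniteField.X_pow_card_sub_X_natDegree_eq K hm] at hcard
  rw [← Multiset.toFinset_card_of_nodup hnodup] at hcard
  refine Eq.trans (congrArg Finset.card ?_) hcard
  ext x
  simp [hne', sub_eq_zero]

theorem FiniteField.mem_range_algebraMap_of_pow_card_eq_self {K L : Type*} [Field K] [Fintype K]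
    [Field L] [Algebra K L] {r : L} (hr : r ^ Fintype.card K = r) :
    ∃ x : K, algebraMap K L x = r := by
  have hc : 1 < Fintype.card K := Fintype.one_lt_card
  have hroots := FiniteField.roots_X_pow_card_sub_X K
  have hsplit : (X ^ Fintype.card K - X : K[X]).Splits := by
    rw [splits_iff_card_roots, hroots, FiniteField.X_pow_card_sub_X_natDegree_eq K hc]
    rfl
  have hmem : r ∈ ((X ^ Fintype.card K - X : K[X]).map (algebraMap K L)).roots := by
    rw [mem_roots (Polynomial.map_ne_zero (FiniteField.X_pow_card_sub_X_ne_zero K hc))]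
    simp [hr]
  rw [hsplit.roots_map, Multiset.mem_map] at hmem
  obtain ⟨x, -, hx⟩ := hmem
  exact ⟨x, hx⟩

theorem FiniteField.exists_quadratic_root_of_card_eq_sq {K : Type*} [Field K] [Fintype K]
    [CharP K 2] {m : ℕ} (hK : Fintype.card K = (2 ^ m) ^ 2) {c u s : K} (hc : c ≠ 0)
    (hcm : c ^ 2 ^ m = c) (hum : u ^ 2 ^ m = u) (hsm : s ^ 2 ^ m = s) :
    ∃ x : K, c * x ^ 2 + u * x + s = 0 := by
  let L := AlgebraicClosure K
  have : CharP L 2 := charP_of_injective_algebraMap (algebraMap K L).injective 2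
  obtain ⟨r, hr⟩ := IsAlgClosed.exists_aeval_eq_zero L (C c * X ^ 2 + C u * X + C s)
    (by rw [degree_quadratic hc]; decide)
  simp only [map_add, map_mul, map_pow, aeval_C, aeval_X] at hr
  set f := algebraMap K L
  have hc' : f c ≠ 0 := by simpa using hc
  have hfrob : ∀ z : L, f c * z ^ 2 + f u * z + f s = 0 →
      f c * (z ^ 2 ^ m) ^ 2 + f u * z ^ 2 ^ m + f s = 0 := by
    intro z hz
    have h := congrArg (· ^ 2 ^ m) hz
    simp only [add_pow_char_pow, mul_pow, ← map_pow, hcm, hum, hsm] at h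
    rw [zero_pow (by positivity)] at h
    rw [← h]; ring
  have h1 := hfrob r hr
  have h2 := hfrob _ h1
  have key : ∀ y z : L, f c * y ^ 2 + f u * y + f s = 0 → f c * z ^ 2 + f u * z + f s = 0 →
      y = z ∨ f c * (y + z) + f u = 0 := by
    intro y z hy hz
    have : (y - z) * (f c * (y + z) + f u) = 0 := by linear_combination hy - hz
    rcases mul_eq_zero.1 this with h | h
    · exact Or.inl (sub_eq_zero.1 h)
    · exact Or.inr h
  have hfix : (r ^ 2 ^ m) ^ 2 ^ m = r := by
    rcases key _ _ h1 hr with h | h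
    · rw [h, h]
    · rcases key _ _ h2 h1 with h' | h'
      · exact h'.trans (iterateFrobenius_inj L 2 m (by simpa only [iterateFrobenius_def] using h'))
      · apply mul_left_cancel₀ hc'
        linear_combination h' - h
  obtain ⟨x, hx⟩ := FiniteField.mem_range_algebraMap_of_pow_card_eq_self (K := K) (r := r)
    (by rw [hK, pow_two, pow_mul, hfix])
  refine ⟨x, (algebraMap K L).injective ?_⟩
  rw [← hx] at hr
  simpa using hr

theorem card_filter_quadratic_eq_two {K : Type*} [Field K] [Fintype K] [DecidableEq K] [CharP K 2]
    {c u s r : K} (hc : c ≠ 0) (hu : u ≠ 0) (hr : c * r ^ 2 + u * r + s = 0) :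
    #{x : K | c * x ^ 2 + u * x + s = 0} = 2 := by
  have h2 : (2 : K) = 0 := CharTwo.two_eq_zero
  have : ({x : K | c * x ^ 2 + u * x + s = 0} : Finset K) = {r, r + u / c} := by
    ext x
    simp only [mem_filter, mem_univ, true_and, mem_insert, mem_singleton]
    constructor
    · intro hx
      have h : (x - r) * (c * (x + r) + u) = 0 := by linear_combination hx - hr
      rcases mul_eq_zero.1 h with h | h
      · exact Or.inl (sub_eq_zero.1 h)
      · right
        apply mul_left_cancel₀ hc
        field_simp
        linear_combination h - (c * r + u) * h2
    · rintro (rfl | rfl)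
      · exact hr
      · have hv : c * (u / c) = u := mul_div_cancel₀ u hc
        linear_combination hr + (u / c) * hv + (c * r * (u / c) + u * (u / c)) * h2
  rw [this, card_pair]
  simpa using ⟨hu, hc⟩

theorem pow_add_add_one_pow_eq_iff {K : Type*} [Field K] [Fintype K] [CharP K 2] {n q d : ℕ}
    (hq : q = 2 ^ n) (hK : Fintype.card K = q ^ 4) (hd : d = q ^ 3 + q ^ 2 + q - 1)
    {b : K} (hb : b ^ (q + 1) = 1) (hb1 : b ≠ 1) (x : K) :
    x ^ d + (x + 1) ^ d = b ↔ x ^ q ^ 2 ≠ x ∧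
      ∃ T S : K, T ^ q = T ∧ S ^ q = S ∧ (b + 1) * x ^ 2 + (b + 1 + T) * x + S = 0 := by
  have h2 : (2 : K) = 0 := CharTwo.two_eq_zero
  have hq0 : 0 < q := by rw [hq]; positivity
  have hadd : ∀ y z : K, (y + z) ^ q = y ^ q + z ^ q := by
    intro y z; rw [hq]; exact add_pow_char_pow y z 2 n
  have hd0 : d ≠ 0 := by
    have : 0 < q ^ 3 := by positivity
    have : 0 < q ^ 2 := by positivity
    omega
  have hb0 : b ≠ 0 := by rintro rfl; simp at hb
  have hc0 : b + 1 ≠ 0 := by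
    intro h; apply hb1; linear_combination h - h2
  have hpow : ∀ z : K, z * z ^ d = z ^ q * (z ^ q) ^ q * ((z ^ q) ^ q) ^ q := by
    intro z
    rw [← pow_mul, ← pow_mul, ← pow_succ', ← pow_add, ← pow_add, hd]
    congr 1
    have : 0 < q ^ 3 := by positivity
    rw [Nat.sub_add_cancel (by omega)]; ring
  have hx4 : (((x ^ q) ^ q) ^ q) ^ q = x := by
    have := FiniteField.pow_card x
    rw [hK] at this
    rw [← pow_mul, ← pow_mul, ← pow_mul, show q * (q * (q * q)) = q ^ 4 by ring, this]
  have hbq : b ^ q * b = 1 := by rw [← pow_succ, hb]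
  have hbqq : (b ^ q) ^ q = b := by
    have h := congrArg (· ^ q) hbq
    simp only [mul_pow, one_pow] at h
    apply mul_right_cancel₀ (pow_ne_zero q hb0)
    rw [h, mul_comm, hbq]
  have hxq2 : x ^ q ^ 2 = (x ^ q) ^ q := by rw [pow_two, pow_mul]
  rw [hxq2]
  have hx := hpow x
  have hx1 := hpow (x + 1)
  simp only [hadd, one_pow] at hx1
  generalize hy : x ^ q = y at *
  generalize hz : y ^ q = z at *
  generalize hw : z ^ q = w at *
  have hiff : x ≠ 0 → x + 1 ≠ 0 → (x ^ d + (x + 1) ^ d = b ↔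
      y * z * w * (x + 1) + (y + 1) * (z + 1) * (w + 1) * x = b * (x * (x + 1))) := by
    intro h0 h1
    rw [← hx, ← hx1]
    constructor
    · intro h; linear_combination (x * (x + 1)) * h
    · intro h
      apply mul_right_cancel₀ (mul_ne_zero h0 h1)
      linear_combination h
  have hx01 : x ^ d + (x + 1) ^ d = b → x ≠ 0 ∧ x + 1 ≠ 0 := by
    intro h
    constructor
    · intro h0
      rw [h0, zero_add, one_pow, zero_pow hd0, zero_add] at h
      exact hb1 h.symm
    · intro h0
      have : x = 1 := by linear_combination h0 - h2
      rw [h0, this, one_pow, zero_pow hd0, add_zero] at h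
      exact hb1 h.symm
  constructor
  · intro h
    obtain ⟨h0, h1⟩ := hx01 h
    rw [hiff h0 h1] at h
    constructor
    · rintro rfl
      have hwy : w = y := by rw [← hw, hy]
      subst hwy
      have : (b + 1) * (z * (z + 1)) = 0 := by
        linear_combination h + z * (z + 1) * (b - w ^ 2 - w) * h2
      exact (mul_ne_zero hc0 (mul_ne_zero h0 h1)) this
    · refine ⟨x + y + z + w, y * z * w + x * y * z + x * y * w + x * z * w, ?_, ?_, ?_⟩
      · simp only [hadd, hy, hz, hw, hx4]; ring
      · simp only [hadd, mul_pow, hy, hz, hw, hx4]; ring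
      · grind
  · rintro ⟨hzx, T, S, hT, hS, h⟩
    have hF1 := congrArg (· ^ q) h
    simp only [hadd, mul_pow, hT, hS, one_pow, hy, zero_pow hq0.ne', pow_right_comm x 2 q] at hF1
    have hF2 := congrArg (· ^ q) hF1
    simp only [hadd, mul_pow, hT, hS, one_pow, hz, hbqq, zero_pow hq0.ne', pow_right_comm y 2 q]
      at hF2
    have hF3 := congrArg (· ^ q) hF2
    simp only [hadd, mul_pow, hT, hS, one_pow, hw, zero_pow hq0.ne', pow_right_comm z 2 q] at hF3
    have hx0 : x ≠ 0 := by
      rintro rfl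
      rw [zero_pow hq0.ne'] at hy
      rw [← hy, zero_pow hq0.ne'] at hz
      exact hzx hz.symm
    have hx1 : x + 1 ≠ 0 := by
      intro h0
      have : x = 1 := by linear_combination h0 - h2
      subst this
      rw [one_pow] at hy
      rw [← hy, one_pow] at hz
      exact hzx hz.symm
    rw [hiff hx0 hx1]
    have hwy : w ≠ y := by
      rintro rfl
      exact hzx (hz.symm.trans hx4)
    have E1 : (b + 1) * (x + z + 1) + T = 0 := by
      apply mul_left_cancel₀ (sub_ne_zero.2 hzx)
      linear_combination hF2 - h
    have E1' : (b ^ q + 1) * (y + w + 1) + T = 0 := by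
      apply mul_left_cancel₀ (sub_ne_zero.2 hwy)
      linear_combination hF3 - hF1
    have E2 : (b + 1) * (x * z) = S := by linear_combination x * E1 - h
    have E2' : (b + 1) * (y * w) = b * S := by
      linear_combination b * y * E1' - b * hF1 - y * w * hbq
    have E3 : (b + 1) * (y + w + 1) + b * T = 0 := by
      linear_combination b * E1' - (y + w + 1) * hbq
    have e1 : x + y + z + w = T := by
      apply mul_left_cancel₀ hc0
      linear_combination E1 + E3 - (b + 1) * (1 + T) * h2
    have e3 : x * z * (y + w) + y * w * (x + z) = S := by
      apply mul_left_cancel₀ (mul_ne_zero hc0 hc0)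
      linear_combination (b + 1) * (y + w) * E2 + (b + 1) * (x + z) * E2' + S * E3 + b * S * E1
        - S * ((b + 1) ^ 2 + b * T) * h2
    linear_combination e3 + x * e1 + h + (x * y * z * w - x ^ 2 - b * x ^ 2 - b * x) * h2

/-- For `b ∈ μ_{q+1} \ {1}` the equation `x^d + (x+1)^d = b`, `d = q³+q²+q-1`,
has exactly `q² - q` solutions in `𝔽_{q⁴}`. -/
theorem stmt11 (n : ℕ) (hn : 0 < n) (q : ℕ) (hq : q = 2 ^ n)
    (K : Type*) [Field K] [Fintype K] (hK : Fintype.card K = q ^ 4)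
    (d : ℕ) (hd : d = q ^ 3 + q ^ 2 + q - 1)
    (b : K) (hb : b ^ (q + 1) = 1) (hb1 : b ≠ 1) :
    {x : K | x ^ d + (x + 1) ^ d = b}.ncard = q ^ 2 - q := by
  classical
  have h2q : 1 < q := by rw [hq]; exact Nat.one_lt_two_pow hn.ne'
  have : CharP K 2 := charP_of_card_eq_prime_pow (f := n * 4) (by rw [hK, hq, pow_mul])
  have h2 : (2 : K) = 0 := CharTwo.two_eq_zero
  have hadd : ∀ y z : K, (y + z) ^ q = y ^ q + z ^ q := by
    intro y z; rw [hq]; exact add_pow_char_pow y z 2 n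
  have hb0 : b ≠ 0 := by rintro rfl; simp at hb
  have hc0 : b + 1 ≠ 0 := by
    intro h; apply hb1; linear_combination h - h2
  have hbq : b ^ q * b = 1 := by rw [← pow_succ, hb]
  have hcq : (b + 1) ^ q * b = b + 1 := by
    rw [hadd, one_pow]; linear_combination hbq
  have hcF : (b + 1) ^ q ≠ b + 1 := by
    intro h
    rw [h] at hcq
    exact hb1 (mul_left_cancel₀ hc0 (by rw [hcq, mul_one]))
  have hbqq : b ^ q ^ 2 = b := by
    have h := congrArg (· ^ q) hbq
    simp only [mul_pow, one_pow] at h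
    rw [pow_two, pow_mul]
    apply mul_right_cancel₀ (pow_ne_zero q hb0)
    rw [h, mul_comm, hbq]
  set F : Finset K := {x : K | x ^ q = x} with hF
  set E : Finset K := {x : K | x ^ q ^ 2 = x} with hE
  have hFmem : ∀ x, x ∈ F ↔ x ^ q = x := by simp [hF]
  have hEmem : ∀ x, x ∈ E ↔ x ^ q ^ 2 = x := by simp [hE]
  have hFcard : #F = q := FiniteField.card_filter_pow_eq_self h2q four_ne_zero hK
  have hEcard : #E = q ^ 2 := FiniteField.card_filter_pow_eq_self (k := 2)
    (Nat.one_lt_pow two_ne_zero h2q) two_ne_zero (by rw [hK]; ring)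
  have hFE : F ⊆ E := by
    intro x hx
    rw [hFmem] at hx
    rw [hEmem, pow_two, pow_mul, hx, hx]
  have hEadd : ∀ y z : K, (y + z) ^ q ^ 2 = y ^ q ^ 2 + z ^ q ^ 2 := by
    intro y z; rw [pow_two, pow_mul, hadd, hadd, pow_mul, pow_mul]
  have hF0 : (0 : K) ∈ F := by rw [hFmem, zero_pow (by omega)]
  have hF1 : (1 : K) ∈ F := by rw [hFmem, one_pow]
  let R : K × K → K → Prop := fun p x => (b + 1) * x ^ 2 + (b + 1 + p.1) * x + p.2 = 0
  have hcount := sum_card_bipartiteAbove_eq_sum_card_bipartiteBelow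
    (s := F ×ˢ F) (t := (Finset.univ : Finset K)) R
  have hleft : ∀ p ∈ F ×ˢ F, #(bipartiteAbove R (Finset.univ : Finset K) p) = 2 := by
    rintro ⟨T, S⟩ hp
    rw [mem_product] at hp
    have hTE := (hEmem _).1 (hFE hp.1)
    have hSE := (hEmem _).1 (hFE hp.2)
    have hTF := (hFmem _).1 hp.1
    have hq2 : q ^ 2 = 2 ^ (n * 2) := by rw [hq, pow_mul]
    have hu : b + 1 + T ≠ 0 := by
      intro h
      have : b + 1 = T := by linear_combination h - T * h2
      exact hcF (this ▸ hTF)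
    obtain ⟨r, hr⟩ := FiniteField.exists_quadratic_root_of_card_eq_sq (K := K) (m := n * 2)
      (c := b + 1) (u := b + 1 + T) (s := S) (by rw [hK, ← hq2]; ring) hc0
      (by rw [← hq2, hEadd, hbqq, one_pow]) (by rw [← hq2, hEadd, hEadd, hbqq, one_pow, hTE])
      (by rw [← hq2, hSE])
    exact card_filter_quadratic_eq_two hc0 hu hr
  have hline : ∀ x ∉ F, ∀ T ∈ F, ∀ S ∈ F, ∀ T' ∈ F, ∀ S' ∈ F,
      T * x + S = T' * x + S' → T = T' ∧ S = S' := by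
    intro x hx T hT S hS T' hT' S' hS' h
    rw [hFmem] at *
    have h' := congrArg (· ^ q) h
    simp only [hadd, mul_pow, hT, hS, hT', hS'] at h'
    have : (T - T') * (x ^ q - x) = 0 := by linear_combination h' - h
    rcases mul_eq_zero.1 this with h0 | h0
    · have h1 := sub_eq_zero.1 h0
      exact ⟨h1, by rw [h1] at h; exact add_left_cancel h⟩
    · exact absurd (sub_eq_zero.1 h0) hx
  have hle : ∀ x ∉ F, #(bipartiteBelow R (F ×ˢ F) x) ≤ 1 := by
    intro x hx
    rw [card_le_one]
    rintro ⟨T, S⟩ hp ⟨T', S'⟩ hp'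
    simp only [bipartiteBelow, mem_filter, mem_product, R] at hp hp'
    obtain ⟨h1, h3⟩ := hline x hx T hp.1.1 S hp.1.2 T' hp'.1.1 S' hp'.1.2
      (by linear_combination hp.2 - hp'.2)
    rw [h1, h3]
  have hright : ∀ x : K, #(bipartiteBelow R (F ×ˢ F) x) =
      (if x ^ d + (x + 1) ^ d = b then 1 else 0) + (if x ∈ E \ F then 1 else 0)
        + (if x = 0 then q else 0) + (if x = 1 then q else 0) := by
    intro x
    have hsol := pow_add_add_one_pow_eq_iff hq hK hd hb hb1 x
    rw [ne_eq, ← hEmem x] at hsol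
    by_cases hxF : x ∈ F
    · have hxE := hFE hxF
      rw [if_neg (by tauto), if_neg (by simp [hxF])]
      by_cases hx0 : x = 0
      · subst hx0
        have : bipartiteBelow R (F ×ˢ F) 0 = F ×ˢ {0} := by
          ext ⟨T, S⟩
          simp only [bipartiteBelow, mem_filter, mem_product, R, mem_singleton]
          constructor
          · rintro ⟨⟨h1, -⟩, h⟩; exact ⟨h1, by linear_combination h⟩
          · rintro ⟨h1, rfl⟩; exact ⟨⟨h1, hF0⟩, by ring⟩
        simp [this, hFcard]
      by_cases hx1 : x = 1
      · subst hx1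
        have : bipartiteBelow R (F ×ˢ F) 1 = F.image fun T => (T, T) := by
          ext ⟨T, S⟩
          simp only [bipartiteBelow, mem_filter, mem_product, R, mem_image, Prod.mk.injEq]
          constructor
          · rintro ⟨⟨h1, -⟩, h⟩
            exact ⟨T, h1, rfl, by linear_combination -h + (b + 1 + T) * h2⟩
          · rintro ⟨T, h1, rfl, rfl⟩; exact ⟨⟨h1, h1⟩, by linear_combination (b + 1 + T) * h2⟩
        rw [this, card_image_of_injective _ (fun a b h => congrArg Prod.fst h)]
        simp [hFcard]
      · rw [if_neg hx0, if_neg hx1, card_eq_zero, eq_empty_iff_forall_notMem]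
        rintro ⟨T, S⟩ hp
        simp only [bipartiteBelow, mem_filter, mem_product, R, hFmem] at hp hxF
        obtain ⟨⟨hT, hS⟩, h⟩ := hp
        have h' := congrArg (· ^ q) h
        simp only [hadd ((b + 1) * x ^ 2 + (b + 1 + T) * x), hadd ((b + 1) * x ^ 2),
          hadd (b + 1) T, mul_pow, hT, hS, hxF, zero_pow (show q ≠ 0 by omega),
          pow_right_comm x 2 q] at h'
        have : ((b + 1) ^ q - (b + 1)) * (x * (x + 1)) = 0 := by linear_combination h' - h
        rcases mul_eq_zero.1 this with h0 | h0
        · exact hcF (sub_eq_zero.1 h0)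
        rcases mul_eq_zero.1 h0 with h0 | h0
        · exact hx0 h0
        · exact hx1 (by linear_combination h0 - h2)
    · have hx0 : x ≠ 0 := by rintro rfl; exact hxF hF0
      have hx1 : x ≠ 1 := by rintro rfl; exact hxF hF1
      rw [if_neg hx0, if_neg hx1, add_zero, add_zero]
      have hone : (∃ T ∈ F, ∃ S ∈ F, (b + 1) * x ^ 2 + (b + 1 + T) * x + S = 0) →
          #(bipartiteBelow R (F ×ˢ F) x) = 1 := by
        rintro ⟨T, hT, S, hS, h⟩
        refine le_antisymm (hle x hxF) (card_pos.2 ⟨(T, S), ?_⟩)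
        simp only [bipartiteBelow, mem_filter, mem_product]
        exact ⟨⟨hT, hS⟩, h⟩
      by_cases hxE : x ∈ E
      · rw [if_neg (by tauto), if_pos (by simp [hxE, hxF])]
        apply hone
        have himg : (F ×ˢ F).image (fun p : K × K => p.1 * x + p.2) = E := by
          apply eq_of_subset_of_card_le
          · intro y hy
            obtain ⟨⟨T, S⟩, hp, rfl⟩ := mem_image.1 hy
            rw [mem_product] at hp
            have hTE := (hEmem _).1 (hFE hp.1)
            have hSE := (hEmem _).1 (hFE hp.2)
            rw [hEmem] at hxE ⊢
            simp only [hEadd, mul_pow, hTE, hSE, hxE]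
          · rw [card_image_of_injOn, card_product, hFcard, hEcard, pow_two]
            rintro ⟨T, S⟩ hp ⟨T', S'⟩ hp' h
            simp only [coe_product, Set.mem_prod, mem_coe] at hp hp'
            obtain ⟨h1, h3⟩ := hline x hxF T hp.1 S hp.2 T' hp'.1 S' hp'.2 h
            rw [h1, h3]
        have hy : (b + 1) * x ^ 2 + (b + 1) * x ∈ E := by
          rw [hEmem] at hxE ⊢
          simp only [hEadd, mul_pow, hbqq, one_pow, pow_right_comm x 2, hxE]
        rw [← himg] at hy
        obtain ⟨⟨T, S⟩, hp, h⟩ := mem_image.1 hy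
        rw [mem_product] at hp
        exact ⟨T, hp.1, S, hp.2, by linear_combination -h + (T * x + S) * h2⟩
      · rw [if_neg (c := x ∈ E \ F) (by simp [hxE])]
        by_cases hs : x ^ d + (x + 1) ^ d = b
        · rw [if_pos hs]
          obtain ⟨-, T, S, hT, hS, h⟩ := hsol.1 hs
          exact hone ⟨T, (hFmem T).2 hT, S, (hFmem S).2 hS, h⟩
        · rw [if_neg hs, card_eq_zero, eq_empty_iff_forall_notMem]
          rintro ⟨T, S⟩ hp
          simp only [bipartiteBelow, mem_filter, mem_product, R, hFmem] at hp
          exact hs (hsol.2 ⟨hxE, T, S, hp.1.1, hp.1.2, hp.2⟩)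
  rw [sum_congr rfl hleft, sum_congr rfl (fun x _ => hright x)] at hcount
  simp only [sum_add_distrib, sum_const, card_product, hFcard, smul_eq_mul, sum_ite_eq',
    mem_univ, if_true, sum_boole, Nat.cast_id, filter_mem_eq_inter, univ_inter] at hcount
  rw [card_sdiff_of_subset hFE, hFcard, hEcard] at hcount
  rw [Set.ncard_eq_toFinset_card', Set.toFinset_ofPred]
  have : q ≤ q ^ 2 := Nat.le_self_pow two_ne_zero q
  rw [← pow_two] at hcount
  omega
end

section
/- Let $n$ be a positive integer, $q = 2^n$, and $d = q^3 + q^2 + q - 1$. The number of $b \in \mathbb{F}_{q^4}$ for which the equation $x^d + (x+1)^d = b$ has no solution in $\mathbb{F}_{q^4}$ is $(\frac{1}{2}q^3 - 1)(q+1)$. -/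
theorem card_pow_eq_one_of_dvd {K : Type*} [Field K] [Fintype K] [DecidableEq K] {k : ℕ}
    (hk0 : 0 < k) (hk : k ∣ Fintype.card K - 1) : (Finset.univ.filter fun x : K => x ^ k = 1).card = k := by
  obtain ⟨g, hg⟩ := IsCyclic.exists_ofOrder_eq_natCard (α := Kˣ)
  have hprim : IsPrimitiveRoot (g : K) (Fintype.card K - 1) := by
    rw [IsPrimitiveRoot.coe_units_iff, ← Fintype.card_units, ← Nat.card_eq_fintype_card, ← hg]
    exact IsPrimitiveRoot.orderOf g
  obtain ⟨c, hc⟩ := hk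
  have hpos : 0 < Fintype.card K - 1 := Nat.sub_pos_of_lt Fintype.one_lt_card
  have h := (hprim.pow hpos (hc.trans (mul_comm _ _))).card_nthRootsFinset
  refine (congrArg Finset.card ?_).trans h
  ext x
  simp [Polynomial.mem_nthRootsFinset hk0]

theorem mem_range_of_pow_card {K L : Type*} [Field K] [Fintype K] [Field L] [Algebra K L] {x : L}
    (hx : x ^ Fintype.card K = x) : ∃ y : K, algebraMap K L y = x := by
  have hcard := Fintype.one_lt_card (α := K)
  have h1 := Polynomial.roots_map_of_injective_of_card_eq_natDegree (algebraMap K L).injective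
    (p := Polynomial.X ^ Fintype.card K - Polynomial.X) (by
      rw [FiniteField.roots_X_pow_card_sub_X, FiniteField.X_pow_card_sub_X_natDegree_eq K hcard]
      rfl)
  have h2 : x ∈ ((Polynomial.X ^ Fintype.card K - Polynomial.X : Polynomial K).map
      (algebraMap K L)).roots := by
    rw [Polynomial.mem_roots (Polynomial.map_ne_zero (FiniteField.X_pow_card_sub_X_ne_zero K hcard))]
    simp [hx]
  rw [← h1] at h2
  obtain ⟨y, -, hy⟩ := Multiset.mem_map.1 h2
  exact ⟨y, hy⟩

theorem eq_or_eq_add_one_of_sq_add_self {K : Type*} [Field K] [CharP K 2] {x y : K}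
    (h : y ^ 2 + y = x ^ 2 + x) : y = x ∨ y = x + 1 := by
  have : (y + x) * (y + x + 1) = 0 := by grind
  rcases mul_eq_zero.1 this with h | h <;> grind

theorem exists_sq_add_self_eq {K : Type*} [Field K] [Fintype K] [CharP K 2] {m : ℕ}
    (hK : Fintype.card K = 2 ^ m * 2 ^ m) {w : K} (hw : w ^ 2 ^ m = w) :
    ∃ x : K, x ^ 2 + x = w := by
  let L := AlgebraicClosure K
  have : CharP L 2 := charP_of_injective_algebraMap (algebraMap K L).injective 2
  obtain ⟨x, hx⟩ := IsAlgClosed.exists_root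
    (Polynomial.X ^ 2 + Polynomial.X + Polynomial.C (algebraMap K L w)) (by
      have : (Polynomial.X ^ 2 + Polynomial.X + Polynomial.C (algebraMap K L w)).degree = 2 := by
        compute_degree!
      simp [this])
  have hx' : x ^ 2 + x = algebraMap K L w := by
    simp only [Polynomial.IsRoot.def, Polynomial.eval_add, Polynomial.eval_pow, Polynomial.eval_X,
      Polynomial.eval_C] at hx
    exact CharTwo.add_eq_zero.1 hx
  have hQ : (x ^ 2 ^ m) ^ 2 + x ^ 2 ^ m = x ^ 2 + x := by
    have := congrArg (· ^ 2 ^ m) hx'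
    simp only [add_pow_char_pow, ← map_pow, hw] at this
    rw [hx', ← this]; ring
  have hcases := eq_or_eq_add_one_of_sq_add_self hQ
  obtain ⟨y, hy⟩ := mem_range_of_pow_card (K := K) (x := x) (by
    rw [hK, pow_mul]
    rcases hcases with h | h
    · rw [h, h]
    · rw [h, add_pow_char_pow, h, one_pow, add_assoc, CharTwo.add_self_eq_zero, add_zero])
  refine ⟨y, (algebraMap K L).injective ?_⟩
  rw [map_add, map_pow, hy, hx']

theorem ne_zero_of_not_fixed {K : Type*} [Field K] {σ : K →+* K} {x : K}
    (hx : σ (σ x) ≠ x) : x ≠ 0 := by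
  rintro rfl
  simp at hx

section
variable {K : Type*} [Field K] [CharP K 2]

theorem sq_add_mul_eq_of_trace_relations {l r D B M μ m e : K} (hl : l = r ^ 2 + r)
    (hm : m = l * D + μ) (he : e = M + l * B + m * r)
    (h : l * (M * D + 1 + m * B + l * B ^ 2 + m ^ 2) = (m + e) * e) : l = M ^ 2 + μ * M := by
  subst hm he hl
  grind

theorem norm_parametrization_identities {u0 u1 g v e : K} (h0 : u0 ≠ 0) (h1 : u1 ≠ 0)
    (hg : g ≠ 0) (hg1 : g + 1 ≠ 0) {β0 β1 β2 β3 B B' ρ u2 u3 m l : K}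
    (hu2 : u2 = v * g / u0) (hu3 : u3 = v / (g * u1)) (hv : v ≠ 0)
    (hn : e ^ 2 * ((u0 + 1) * (u1 + 1) * (u2 + 1) * (u3 + 1)) = 1)
    (hb0 : β0 = e * (u0 + v / u0 + 1 + v)) (hb1 : β1 = e * (u1 + v / u1 + 1 + v))
    (hb2 : β2 = e * (u2 + v / u2 + 1 + v)) (hb3 : β3 = e * (u3 + v / u3 + 1 + v))
    (hB : B = β0 + β2) (hB' : B' = β1 + β3) (hr : ρ = g / (g + 1)) (hm : m = (1 + v) * e)
    (hl : l = ρ ^ 2 + ρ) :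
    β0 * β2 + 1 = (B + B') * (l * B + e + m * ρ) ∧
    l * (β0 * β2 + m * B + l * B ^ 2 + m ^ 2) = (m + e) * e ∧
    e * u0 = ρ * (β0 + m) + (ρ + 1) * ρ * B ∧ e * u0 ^ 2 + m + e = u0 * (β0 + m) := by
  have l2 : l = g / (g+1)^2 := by
    rw [hl, hr]; field_simp; grind
  have hB2 : B = e * (g+1) * (u0^2+v*g)/(g*u0) := by
    rw [hB, hb0,hb2,hu2]; field_simp; grind
  have hB2' : B' = e * (g+1) * (g*u1^2+v)/(g*u1) := by
    rw [hB', hb1,hb3,hu3]; field_simp; grind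
  refine ⟨?_, ?_, ?_, ?_⟩
  · rw [← hn, hB2', hB2, l2, hm, hr, hb0, hb2, hu2, hu3]
    field_simp
    grind
  · rw [hB2, l2, hm, hb0, hb2, hu2]
    field_simp
    grind
  · rw [hB2, hm, hr, hb0]
    field_simp
    grind
  · rw [hm, hb0]
    field_simp
    grind

variable (σ : K →+* K)

/-- `v ^ 2` and `w ^ 2` are the norms of `u` and `u + 1`, where `u` is off the fixed field of `σ ^ 2`
and has relative norm off the fixed field of `σ`, and `β ^ 2` is the resulting value of
`x ^ d + (x + 1) ^ d` at `x = u / (u + 1)`. -/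
structure NormPair (u β v w : K) : Prop where
  u0 : u ≠ 0
  v1 : σ v = v
  w1 : σ w = w
  w0 : w ≠ 0
  hv : v ^ 2 = u * σ u * σ (σ u) * σ (σ (σ u))
  hw : w ^ 2 = (u + 1) * (σ u + 1) * (σ (σ u) + 1) * (σ (σ (σ u)) + 1)
  hβ : w * β * u = (u + v) * (u + 1)
  nf : σ (σ u) ≠ u
  gen : σ (u * σ (σ u)) ≠ u * σ (σ u)

variable {σ}

theorem NormPair.not_fixed {u β v w : K} (h : NormPair σ u β v w) :
    σ (σ β) ≠ β := by
  intro hb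
  have h1 := congrArg (fun z => σ (σ z)) h.hβ
  simp only [map_mul, map_add, map_one, h.v1, h.w1, hb] at h1
  have h2 := h.hβ
  have hg := h.gen
  simp only [map_mul] at hg
  have h0 := h.u0
  have hv := h.hv
  have : (u + σ (σ u)) * (u + σ (σ u) + (1 + v + w * β)) = 0 := by grind
  rcases mul_eq_zero.1 this with h3 | h3
  · exact h.nf (CharTwo.add_eq_zero.1 h3).symm
  · have h4 : u * σ (σ u) = v := by
      grind
    apply h.gen
    rw [h4, h.v1]

theorem NormPair.exists_rho {u β v w : K} (h : NormPair σ u β v w) :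
    ∃ ρ m e l : K, e ≠ 0 ∧ σ ρ = ρ + 1 ∧ σ m = m ∧ σ e = e ∧ l = ρ ^ 2 + ρ ∧
    β * σ (σ β) + 1
      = (β + σ (σ β) + σ (β + σ (σ β))) * (l * (β + σ (σ β)) + e + m * ρ) ∧
    l * (β * σ (σ β) + m * (β + σ (σ β)) + l * (β + σ (σ β)) ^ 2 + m ^ 2) = (m + e) * e ∧
    e * u = ρ * (β + m) + (ρ + 1) * ρ * (β + σ (σ β)) ∧ e * u ^ 2 + m + e = u * (β + m) := by
  have h0 := h.u0
  have h1 : σ u ≠ 0 := by simpa using h0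
  have h2 : σ (σ u) ≠ 0 := by simpa using h0
  have h3 : σ (σ (σ u)) ≠ 0 := by simpa using h0
  have hv0 : v ≠ 0 := by
    intro hv
    have := h.hv
    simp_all
  have hvP : u * σ (σ u) ≠ v := by
    intro hP; apply h.gen; rw [hP, h.v1]
  have hw0 := h.w0
  have hv := h.hv
  obtain ⟨g, hg⟩ : ∃ g, g = u * σ (σ u) / v := ⟨_, rfl⟩
  have hg0 : g ≠ 0 := by rw [hg]; positivity
  have hg1 : g + 1 ≠ 0 := by
    intro hc
    have : g = 1 := CharTwo.add_eq_zero.1 hc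
    rw [hg, div_eq_one_iff_eq hv0] at this
    exact hvP this
  have hσg : σ g * g = 1 := by
    rw [hg]; simp only [map_div₀, map_mul, h.v1]; field_simp; rw [hv]; ring
  have hσg' : σ g = 1 / g := by field_simp; exact hσg
  have hu2 : σ (σ u) = v * g / u := by rw [hg]; field_simp
  have hu3 : σ (σ (σ u)) = v / (g * σ u) := by rw [hg]; field_simp; rw [hv]; ring
  have hβ : β = w⁻¹ * (u + v/u + 1 + v) := by
    have := h.hβ
    field_simp; rw [mul_comm β w, this]; ring
  have hw := h.hw
  have key := norm_parametrization_identities (β0 := β) (β1 := σ β) (β2 := σ (σ β))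
    (β3 := σ (σ (σ β))) (B' := σ (β + σ (σ β))) (e := w⁻¹)
    h0 h1 hg0 hg1 hu2 hu3 hv0
    (by rw [← hw]; field_simp) hβ (by conv_lhs => rw [hβ]
                                      simp [h.v1, h.w1])
    (by conv_lhs => rw [hβ]
        simp [h.v1, h.w1])
    (by conv_lhs => rw [hβ]
        simp [h.v1, h.w1]) rfl (by simp) rfl rfl rfl
  refine ⟨g / (g+1), (1+v) * w⁻¹, w⁻¹, _, by positivity, ?_, ?_, ?_, rfl, key⟩
  · simp only [map_div₀, map_add, map_one, hσg']
    have : 1 + g ≠ 0 := by rwa [add_comm]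
    field_simp
    grind
  · simp [h.v1, h.w1]
  · simp [h.w1]

theorem NormPair.delta_ne_zero {u β v w : K} (h : NormPair σ u β v w) :
    β + σ (σ β) + σ (β + σ (σ β)) ≠ 0 := by
  intro hD
  obtain ⟨ρ, m, e, l, -, -, -, -, -, h1, -⟩ := h.exists_rho
  rw [hD, zero_mul] at h1
  have h2 : β * σ (σ β) = 1 := CharTwo.add_eq_zero.1 h1
  have h3 := congrArg σ h2
  simp only [map_mul, map_one, map_add] at h3 hD
  have : (σ β + β) * (σ β + σ (σ β)) = 0 := by grind
  apply h.not_fixed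
  rcases mul_eq_zero.1 this with h4 | h4
  · rw [CharTwo.add_eq_zero.1 h4, CharTwo.add_eq_zero.1 h4]
  · have := σ.injective (CharTwo.add_eq_zero.1 h4)
    rw [← this, ← this]

theorem NormPair.unique {u β v w u' v' w' : K} (h : NormPair σ u β v w) (h' : NormPair σ u' β v' w')
    (hσ : ∀ x, σ (σ (σ (σ x))) = x) : u' = u ∨ u * u' = 1 := by
  have hD := h.delta_ne_zero
  obtain ⟨ρ, m, e, l, he, hρ, hm, hse, hl, h1, h2, h3, h4⟩ := h.exists_rho
  obtain ⟨ρ', m', e', l', he', hρ', hm', hse', hl', h1', h2', h3', h4'⟩ := h'.exists_rho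
  obtain ⟨B, hB⟩ : ∃ B, B = β + σ (σ β) := ⟨_, rfl⟩
  obtain ⟨C, hC⟩ : ∃ C, C = β * σ (σ β) := ⟨_, rfl⟩
  obtain ⟨D, hDe⟩ : ∃ D, D = B + σ B := ⟨_, rfl⟩
  rw [← hB] at hD h1 h2 h3 h1' h2' h3'
  rw [← hC] at h1 h2 h1' h2'
  rw [← hDe] at hD h1 h1'
  have hσB : σ (σ B) = B := by rw [hB]; simp [hσ, add_comm]
  have hσB' : σ B = B + D := by rw [hDe]; grind
  have hσD : σ D = D := by rw [hDe]; simp [hσB, add_comm]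
  obtain ⟨M, hM⟩ : ∃ M, M = (C + 1) / D := ⟨_, rfl⟩
  have hM1 : C + 1 = M * D := by rw [hM]; field_simp
  have hMs : C = M * D + 1 := by grind
  have aux : ∀ {ρ m e l : K}, σ ρ = ρ + 1 → σ m = m → σ e = e → l = ρ ^ 2 + ρ →
      C + 1 = D * (l * B + e + m * ρ) → l * (C + m * B + l * B ^ 2 + m ^ 2) = (m + e) * e →
      m = l * D + (M + σ M) ∧ e = M + l * B + m * ρ ∧ l = M ^ 2 + (M + σ M) * M := by
    intro ρ m e l hρ hm he hl h1 h2
    have h5 : M = l * B + e + m * ρ := by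
      apply mul_left_cancel₀ hD; rw [← h1, hM1, mul_comm]
    have h6 := congrArg σ h5
    have hσl : σ l = l := by rw [hl]; simp only [map_add, map_pow, hρ]; grind
    simp only [map_add, map_mul, hρ, hm, he, hσB', hσl] at h6
    have h7 : m = l * D + (M + σ M) := by rw [h6, h5]; grind
    have h8 : e = M + l * B + m * ρ := by rw [h5]; grind
    exact ⟨h7, h8, sq_add_mul_eq_of_trace_relations hl h7 h8 (by rw [← hMs]; exact h2)⟩
  obtain ⟨a1, a2, a3⟩ := aux hρ hm hse hl h1 h2
  obtain ⟨b1, b2, b3⟩ := aux hρ' hm' hse' hl' h1' h2'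
  have hll : l' = l := by rw [a3, b3]
  have hmm : m' = m := by rw [a1, b1, hll]
  have : (ρ' + ρ) * (ρ' + ρ + 1) = 0 := by grind
  rcases mul_eq_zero.1 this with h5 | h5
  · left
    have h6 : ρ' = ρ := CharTwo.add_eq_zero.1 h5
    have h7 : e' = e := by rw [a2, b2, hll, hmm, h6]
    apply mul_left_cancel₀ he
    rw [h3, ← h7, h3', h6, hmm]
  · right
    have h6 : ρ' = ρ + 1 := by grind
    have h7 : e' = e + m := by rw [a2, b2, hll, hmm, h6]; ring
    have h8 : e' * u' = e * u + β + m := by rw [h3, h3', h6, hmm]; grind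
    apply mul_left_cancel₀ (mul_ne_zero he he')
    have : (e * u) * (e' * u') = e * e' := by
      rw [h8, h7]; grind
    linear_combination this
end

section
variable {K : Type*} [Field K] [CharP K 2] {σ : K →+* K}

theorem exists_fixed_sqrt [Finite K] {y : K} (hy : σ y = y) : ∃ v, σ v = v ∧ v ^ 2 = y := by
  have := Fintype.ofFinite K
  obtain ⟨v, hv⟩ := FiniteField.isSquare_of_char_two (ringChar.eq K 2) y
  have hv2 : v ^ 2 = y := by rw [hv, sq]
  refine ⟨v, CharTwo.sq_injective ?_, hv2⟩
  change σ v ^ 2 = v ^ 2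
  rw [← map_pow, hv2, hy]

theorem add_one_ne_zero_of_not_fixed {x : K} (hx : σ (σ x) ≠ x) : x + 1 ≠ 0 := by
  intro h
  apply hx
  rw [CharTwo.add_eq_zero.1 h, map_one, map_one]

/-- `x` lies outside the quadratic subfield and the ratio of the relative norms of `x` and
`x + 1` lies outside the fixed field. -/
structure Generic (σ : K →+* K) (x : K) : Prop where
  nf : σ (σ x) ≠ x
  gen : σ (x * σ (σ x)) * ((x + 1) * σ (σ (x + 1))) ≠ x * σ (σ x) * σ ((x + 1) * σ (σ (x + 1)))

theorem Generic.add_one {x : K} (h : Generic σ x) : Generic σ (x + 1) := by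
  refine ⟨?_, ?_⟩
  · simpa using h.nf
  · have : x + 1 + 1 = x := by rw [add_assoc, CharTwo.add_self_eq_zero, add_zero]
    rw [this]
    intro h'
    exact h.gen (by rw [mul_comm, ← h', mul_comm])

theorem Generic.exists_normPair [Finite K] (hσ : ∀ x, σ (σ (σ (σ x))) = x) {d : ℕ}
    (hd : ∀ x, x ^ d * x ^ 2 = x * σ x * σ (σ x) * σ (σ (σ x))) {x : K} (h : Generic σ x) :
    ∃ β v w, NormPair σ (x / (x + 1)) β v w ∧ x ^ d + (x + 1) ^ d = β ^ 2 := by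
  have hx0 := ne_zero_of_not_fixed h.nf
  have hx1 := add_one_ne_zero_of_not_fixed h.nf
  have hy : ∀ {y : K}, y ≠ 0 → σ y ≠ 0 := fun {y} hy => (map_ne_zero σ).2 hy
  obtain ⟨u, hu⟩ : ∃ u, u = x / (x + 1) := ⟨_, rfl⟩
  have hu0 : u ≠ 0 := by rw [hu]; positivity
  have hu1 : u + 1 = 1 / (x + 1) := by rw [hu]; field_simp; grind
  have hxu : x = u / (u + 1) := by rw [hu1, hu]; field_simp
  obtain ⟨v, hv, hv2⟩ := exists_fixed_sqrt (σ := σ) (y := u * σ u * σ (σ u) * σ (σ (σ u)))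
    (by simp only [map_mul, hσ]; ring)
  obtain ⟨w, hw, hw2⟩ := exists_fixed_sqrt (σ := σ)
    (y := (u + 1) * (σ u + 1) * (σ (σ u) + 1) * (σ (σ (σ u)) + 1))
    (by simp only [map_mul, map_add, map_one, hσ]; ring)
  have hu1' : u + 1 ≠ 0 := by rw [hu1]; exact one_div_ne_zero hx1
  have hw0 : w ≠ 0 := by
    have := mul_ne_zero (mul_ne_zero (mul_ne_zero hu1' (hy hu1')) (hy (hy hu1')))
      (hy (hy (hy hu1')))
    simp only [map_add, map_one] at this
    rw [← hw2] at this
    exact fun h0 => this (by rw [h0]; ring)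
  rw [← hu]
  refine ⟨(u + v) * (u + 1) / (w * u), v, w, ⟨hu0, hv, hw, hw0, hv2, hw2, ?_, ?_, ?_⟩, ?_⟩
  · field_simp
  · intro h'
    apply h.nf
    rw [hxu]
    simp only [map_div₀, map_add, map_one, h']
  · intro h'
    apply h.gen
    have e1 : x = u * (x + 1) := by rw [hu]; field_simp
    have e2 : x * σ (σ x) = u * σ (σ u) * ((x + 1) * σ (σ (x + 1))) := by
      nth_rw 1 2 [e1]; simp only [map_mul]; ring
    rw [e2, map_mul, h']
    ring
  · have e1 := hd (x + 1)
    have e2 : (x + 1) ^ d = 1 / (w ^ 2 * (x + 1) ^ 2) := by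
      rw [hw2]
      have a0 : σ u + 1 = 1 / (σ (x + 1)) := by simpa using congrArg σ hu1
      have a1 : σ (σ u) + 1 = 1 / (σ (σ (x + 1))) := by simpa using congrArg σ a0
      have a2 : σ (σ (σ u)) + 1 = 1 / (σ (σ (σ (x + 1)))) := by simpa using congrArg σ a1
      rw [hu1, a0, a1, a2]
      have b0 := hy hx1
      have b1 := hy b0
      have b2 := hy b1
      rw [← mul_left_inj' (pow_ne_zero 2 hx1), e1]
      field_simp
    have e3 : x ^ d = v ^ 2 * ((x + 1) ^ d * (x + 1) ^ 2) / x ^ 2 := by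
      rw [eq_div_iff (pow_ne_zero 2 hx0), hd, e1, hv2]
      have e1 : x = u * (x + 1) := by rw [hu]; field_simp
      nth_rw 1 2 3 4 [e1]
      simp only [map_mul]; ring
    rw [e3, e2, hu1, hu]
    field_simp
    ring_nf
    grind

theorem Generic.eq_or_eq_add_one [Finite K] (hσ : ∀ x, σ (σ (σ (σ x))) = x) {d : ℕ}
    (hd : ∀ x, x ^ d * x ^ 2 = x * σ x * σ (σ x) * σ (σ (σ x))) {x y : K} (hx : Generic σ x)
    (hy : Generic σ y) (hxy : x ^ d + (x + 1) ^ d = y ^ d + (y + 1) ^ d) : y = x ∨ y = x + 1 := by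
  obtain ⟨β, v, w, h, e⟩ := hx.exists_normPair hσ hd
  obtain ⟨β', v', w', h', e'⟩ := hy.exists_normPair hσ hd
  have hβ : β = β' := CharTwo.sq_injective (by change β ^ 2 = β' ^ 2; rw [← e, ← e', hxy])
  subst hβ
  have hx1 := add_one_ne_zero_of_not_fixed hx.nf
  have hy1 := add_one_ne_zero_of_not_fixed hy.nf
  rcases h.unique h' hσ with h1 | h1
  · left
    field_simp at h1
    linear_combination h1
  · right
    field_simp at h1
    grind

theorem Generic.mul_map_ne_one [Finite K] (hσ : ∀ x, σ (σ (σ (σ x))) = x) {d : ℕ}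
    (hd : ∀ x, x ^ d * x ^ 2 = x * σ x * σ (σ x) * σ (σ (σ x))) {x : K} (hx : Generic σ x) :
    (x ^ d + (x + 1) ^ d) * σ (x ^ d + (x + 1) ^ d) ≠ 1 := by
  obtain ⟨β, v, w, h, e⟩ := hx.exists_normPair hσ hd
  rw [e]
  intro h1
  apply h.not_fixed
  apply CharTwo.sq_injective
  change σ (σ β) ^ 2 = β ^ 2
  have h2 := congrArg σ h1
  rw [map_mul, map_one] at h2
  rw [← map_pow, ← map_pow]
  apply mul_right_cancel₀ (b := σ (β ^ 2)) (right_ne_zero_of_mul_eq_one h1)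
  rw [h1, mul_comm, h2]

theorem eq_one_of_fixed {d : ℕ} (hd0 : d ≠ 0)
    (hd : ∀ x, x ^ d * x ^ 2 = x * σ x * σ (σ x) * σ (σ (σ x))) {x : K} (hx : σ (σ x) = x) :
    x ^ d + (x + 1) ^ d = 1 := by
  have key : ∀ y, σ (σ y) = y → y ^ d = σ y ^ 2 := by
    intro y hy
    by_cases h0 : y = 0
    · simp [h0, hd0]
    · apply mul_right_cancel₀ (pow_ne_zero 2 h0)
      rw [hd, hy]; ring
  rw [key x hx, key (x + 1) (by simp [hx]), map_add, map_one]
  grind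

theorem mul_map_eq_one_of_not_generic (hσ : ∀ x, σ (σ (σ (σ x))) = x) {d : ℕ} (hd0 : d ≠ 0)
    (hd : ∀ x, x ^ d * x ^ 2 = x * σ x * σ (σ x) * σ (σ (σ x))) {x : K} (hx : ¬ Generic σ x) :
    (x ^ d + (x + 1) ^ d) * σ (x ^ d + (x + 1) ^ d) = 1 := by
  by_cases hf : σ (σ x) = x
  · rw [eq_one_of_fixed hd0 hd hf]; simp
  have hg : σ (x * σ (σ x)) * ((x + 1) * σ (σ (x + 1))) =
      x * σ (σ x) * σ ((x + 1) * σ (σ (x + 1))) := by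
    by_contra h
    exact hx ⟨hf, h⟩
  have hx0 := ne_zero_of_not_fixed hf
  have hx1 := add_one_ne_zero_of_not_fixed hf
  have hy : ∀ {y : K}, y ≠ 0 → σ y ≠ 0 := fun {y} hy => (map_ne_zero σ).2 hy
  obtain ⟨Q, hQ⟩ : ∃ Q, Q = (x + 1) * σ (σ (x + 1)) := ⟨_, rfl⟩
  have hQ0 : Q ≠ 0 := by rw [hQ]; exact mul_ne_zero hx1 (hy (hy hx1))
  rw [← hQ] at hg
  have h1 : x ^ d = σ (σ x) ^ 2 * σ Q / Q := by
    rw [eq_div_iff hQ0]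
    apply mul_right_cancel₀ (pow_ne_zero 2 hx0)
    rw [mul_right_comm, hd]
    simp only [map_mul] at hg
    linear_combination (x * σ (σ x)) * hg
  have h2 : (x + 1) ^ d = σ (σ (x + 1)) ^ 2 * σ Q / Q := by
    rw [eq_div_iff hQ0]
    apply mul_right_cancel₀ (pow_ne_zero 2 hx1)
    rw [mul_right_comm, hd, hQ]
    simp only [map_mul]
    ring
  have h3 : x ^ d + (x + 1) ^ d = σ Q / Q := by
    rw [h1, h2, map_add, map_add, map_one, map_one]
    field_simp
    grind
  have hσQ : σ (σ Q) = Q := by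
    rw [hQ, map_mul, map_mul, hσ, mul_comm]
  have := hy hQ0
  rw [h3, map_div₀, hσQ]
  field_simp

theorem exists_fixed_sq_add_self_ne [Finite K] : ∃ t, σ t = t ∧ ∀ y, σ y = y → y ^ 2 + y ≠ t := by
  by_contra! h
  let φ : {y : K // σ y = y} → {y : K // σ y = y} := fun y => ⟨y ^ 2 + y, by simp [y.2]⟩
  have hsurj : Function.Surjective φ := by
    rintro ⟨t, ht⟩
    obtain ⟨y, hy, hyt⟩ := h t ht
    exact ⟨⟨y, hy⟩, Subtype.ext hyt⟩
  have h01 : (⟨0, map_zero σ⟩ : {y : K // σ y = y}) = ⟨1, map_one σ⟩ :=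
    Finite.injective_iff_surjective.2 hsurj (Subtype.ext (by change (0 : K) ^ 2 + 0 = 1 ^ 2 + 1; grind))
  exact zero_ne_one (congrArg Subtype.val h01)

theorem artinSchreier_product_identity {x y a b : K} (hx : x ^ 2 + x = a) (hy : y ^ 2 + y = b * a) :
    x * y * (x + 1) * (y + 1) * (x + 1) ^ 2 + (x + 1) * (y + 1) * (x + 1 + 1) * (y + 1 + 1) * x ^ 2
      = b * (x * (x + 1)) ^ 2 := by
  have h : x + 1 + 1 = x := by rw [add_assoc, CharTwo.add_self_eq_zero, add_zero]
  have h' : y + 1 + 1 = y := by rw [add_assoc, CharTwo.add_self_eq_zero, add_zero]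
  have e1 : (x + 1) ^ 2 + x ^ 2 = 1 := by grind
  have e2 : x * (x + 1) = a := by linear_combination hx
  have e3 : y * (y + 1) = b * a := by linear_combination hy
  rw [h, h']
  calc _ = (x * (x + 1)) * (y * (y + 1)) * ((x + 1) ^ 2 + x ^ 2) := by ring
    _ = b * (x * (x + 1)) ^ 2 := by rw [e1, e3, e2]; ring

theorem exists_eq_of_mul_map_eq_one [Finite K] {d : ℕ} (hd0 : d ≠ 0)
    (hd : ∀ x, x ^ d * x ^ 2 = x * σ x * σ (σ x) * σ (σ (σ x)))
    (hroot : ∀ w, σ (σ w) = w → ∃ x, x ^ 2 + x = w) {b : K} (hb : b * σ b = 1) :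
    ∃ x, x ^ d + (x + 1) ^ d = b := by
  by_cases hb1 : b = 1
  · exact ⟨0, by simp [hb1, hd0]⟩
  have hσb : σ (σ b) = b := by
    have h2 := congrArg σ hb
    rw [map_mul, map_one] at h2
    apply mul_right_cancel₀ (b := σ b) (right_ne_zero_of_mul_eq_one hb)
    rw [hb, mul_comm, h2]
  obtain ⟨p, hp⟩ : ∃ p, p = 1 + σ b := ⟨_, rfl⟩
  have hp1 : σ p = b * p := by rw [hp, map_add, map_one, hσb]; linear_combination -hb
  have hp0 : p ≠ 0 := by
    intro h0
    rw [hp] at h0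
    have : σ b = 1 := (CharTwo.add_eq_zero.1 h0).symm
    rw [this, mul_one] at hb
    exact hb1 hb
  have hpp : p + σ p ≠ 0 := by
    intro h0
    rw [hp1] at h0
    have : p * (1 + b) = 0 := by linear_combination h0
    rcases mul_eq_zero.1 this with h | h
    · exact hp0 h
    · exact hb1 (CharTwo.add_eq_zero.1 h).symm
  have hσp : σ (σ p) = p := by rw [hp]; simp [hσb]
  obtain ⟨t, ht, htn⟩ := exists_fixed_sq_add_self_ne (σ := σ)
  obtain ⟨k, hk⟩ : ∃ k, k = t / (p + σ p) := ⟨_, rfl⟩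
  have hσk : σ k = k := by rw [hk, map_div₀, ht, map_add, hσp, add_comm]
  obtain ⟨x, hx⟩ := hroot (k * p) (by simp [hσk, hσp])
  have hx1 := congrArg σ hx
  have hx2 := congrArg σ hx1
  simp only [map_mul, map_add, map_pow, hσk, hσp] at hx1 hx2
  have hxn : σ (σ x) ≠ x := by
    intro hf
    apply htn (x + σ x) (by rw [map_add, hf, add_comm])
    have : t = k * (p + σ p) := by rw [hk]; field_simp
    rw [this, CharTwo.add_sq]
    linear_combination hx + hx1
  have hx3 : σ (σ x) = x + 1 :=
    (eq_or_eq_add_one_of_sq_add_self (hx2.trans hx.symm)).resolve_left hxn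
  have hx0 := ne_zero_of_not_fixed hxn
  have hx01 := add_one_ne_zero_of_not_fixed hxn
  have h1 := hd x
  have h2 := hd (x + 1)
  simp only [map_add, map_one, hx3] at h1 h2
  refine ⟨x, ?_⟩
  apply mul_right_cancel₀ (pow_ne_zero 2 (mul_ne_zero hx0 hx01))
  rw [hp1] at hx1
  calc (x ^ d + (x + 1) ^ d) * (x * (x + 1)) ^ 2
      = (x ^ d * x ^ 2) * (x + 1) ^ 2 + ((x + 1) ^ d * (x + 1) ^ 2) * x ^ 2 := by ring
    _ = b * (x * (x + 1)) ^ 2 := by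
      rw [h1, h2]
      exact artinSchreier_product_identity hx (hx1.trans (mul_left_comm k b p))

end

theorem card_pow_succ_eq_self_of_dvd {K : Type*} [Field K] [Fintype K] [DecidableEq K] {k : ℕ}
    (hk0 : 0 < k) (hk : k ∣ Fintype.card K - 1) :
    (Finset.univ.filter fun x : K => x ^ (k + 1) = x).card = k + 1 := by
  have : (Finset.univ.filter fun x : K => x ^ (k + 1) = x)
      = insert 0 (Finset.univ.filter fun x : K => x ^ k = 1) := by
    ext x
    by_cases hx : x = 0
    · simp [hx]
    · simp [hx, pow_succ]
  rw [this, Finset.card_insert_of_notMem (by simp [hk0.ne']), card_pow_eq_one_of_dvd hk0 hk]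

section
variable {K : Type*} [Field K] [CharP K 2] {σ : K →+* K}

theorem inv_add_one_add_one_involutive : Function.Involutive fun x : K => (x + 1)⁻¹ + 1 := by
  intro x
  change ((x + 1)⁻¹ + 1 + 1)⁻¹ + 1 = x
  rw [add_assoc, CharTwo.add_self_eq_zero, add_zero, inv_inv, add_assoc, CharTwo.add_self_eq_zero,
    add_zero]

theorem not_generic_iff {x u : K} (hu : u = (x + 1)⁻¹ + 1) :
    ¬ Generic σ x ↔ σ (σ u) = u ∨ σ (u * σ (σ u)) = u * σ (σ u) := by
  by_cases hx1 : x + 1 = 0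
  · have hx : x = 1 := CharTwo.add_eq_zero.1 hx1
    refine iff_of_true (fun h => h.nf (by simp [hx])) (Or.inl (by simp [hu, hx1]))
  have hy : ∀ {y : K}, y ≠ 0 → σ y ≠ 0 := fun {y} hy => (map_ne_zero σ).2 hy
  have hQ : (x + 1) * σ (σ (x + 1)) ≠ 0 := mul_ne_zero hx1 (hy (hy hx1))
  have e1 : σ (σ u) = u ↔ σ (σ x) = x := by
    rw [hu]
    simp [map_inv₀]
  have e2 : u * σ (σ u) = x * σ (σ x) / ((x + 1) * σ (σ (x + 1))) := by
    have : u = x / (x + 1) := by rw [hu]; field_simp; grind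
    rw [this, map_div₀, map_div₀, div_mul_div_comm]
  rw [e1, e2, map_div₀, div_eq_div_iff (hy hQ) hQ, ← not_iff_not, not_not, not_or]
  exact ⟨fun h => ⟨h.nf, h.gen⟩, fun h => ⟨h.1, h.2⟩⟩

theorem card_not_generic [Fintype K] [DecidableEq K] {q : ℕ} (hq : 2 ≤ q)
    (hK : Fintype.card K = q ^ 4) (hσ : ∀ x, σ x = x ^ q)
    [DecidablePred (Generic σ)] :
    (Finset.univ.filter fun x : K => ¬ Generic σ x).card = q ^ 3 := by
  obtain ⟨r, rfl⟩ : ∃ r, q = r + 1 := ⟨q - 1, by omega⟩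
  have hr : 0 < r := by omega
  let A := Finset.univ.filter fun u : K => σ (σ u) = u
  let B := Finset.univ.filter fun u : K => σ (u * σ (σ u)) = u * σ (σ u)
  have h0 : (Finset.univ.filter fun x : K => ¬ Generic σ x).card = (A ∪ B).card := by
    refine Finset.card_equiv inv_add_one_add_one_involutive.toPerm fun x => ?_
    simp only [Finset.mem_filter_univ, Finset.mem_union, A, B]
    exact not_generic_iff rfl
  have hA : A.card = (r ^ 2 + 2 * r) + 1 := by
    rw [← card_pow_succ_eq_self_of_dvd (K := K) (k := r ^ 2 + 2 * r) (by positivity)]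
    · refine congrArg Finset.card (Finset.filter_congr fun u _ => ?_)
      rw [hσ, hσ, ← pow_mul]
      ring_nf
    · rw [hK]
      refine ⟨r ^ 2 + 2 * r + 2, ?_⟩
      have : (r + 1) ^ 4 = (r ^ 2 + 2 * r) * (r ^ 2 + 2 * r + 2) + 1 := by ring
      omega
  have hB : B.card = ((r + 1) ^ 2 + 1) * r + 1 := by
    rw [← card_pow_succ_eq_self_of_dvd (K := K) (k := ((r + 1) ^ 2 + 1) * r) (by positivity)]
    · refine congrArg Finset.card (Finset.filter_congr fun u _ => ?_)
      have e : u * σ (σ u) = u ^ ((r + 1) ^ 2 + 1) := by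
        rw [hσ, hσ]; ring
      rw [e, hσ]
      by_cases hu : u = 0
      · simp [hu]
      · rw [← pow_mul, mul_add, mul_one, pow_add, pow_succ (n := _ * r),
          mul_left_eq_self₀, mul_left_eq_self₀]
        simp [hu]
    · rw [hK]
      refine ⟨r + 2, ?_⟩
      have : (r + 1) ^ 4 = (((r + 1) ^ 2 + 1) * r) * (r + 2) + 1 := by ring
      omega
  have hAB : (A ∩ B).card = r + 1 := by
    rw [← card_pow_succ_eq_self_of_dvd (K := K) (k := r) hr]
    · refine congrArg Finset.card ?_
      ext u
      simp only [Finset.mem_inter, Finset.mem_filter_univ, A, B, ← hσ]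
      constructor
      · rintro ⟨h1, h2⟩
        rw [h1, ← sq, map_pow] at h2
        exact CharTwo.sq_injective h2
      · intro h
        simp [h]
    · rw [hK]
      refine ⟨(r + 2) * (r ^ 2 + 2 * r + 2), ?_⟩
      have : (r + 1) ^ 4 = r * ((r + 2) * (r ^ 2 + 2 * r + 2)) + 1 := by ring
      omega
  have h := Finset.card_union_add_card_inter A B
  rw [← h0, hA, hB, hAB] at h
  have : (r + 1) ^ 3 + (r + 1) = r ^ 2 + 2 * r + 1 + (((r + 1) ^ 2 + 1) * r + 1) := by ring
  omega

theorem card_image_eq [Fintype K] [DecidableEq K] {q : ℕ} (hq : 2 ≤ q)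
    (hK : Fintype.card K = q ^ 4) (hσ : ∀ x, σ x = x ^ q) {d : ℕ} (hd0 : d ≠ 0)
    (hd : ∀ x : K, x ^ d * x ^ 2 = x * σ x * σ (σ x) * σ (σ (σ x)))
    (hroot : ∀ w, σ (σ w) = w → ∃ x, x ^ 2 + x = w) :
    2 * (Finset.univ.image fun x : K => x ^ d + (x + 1) ^ d).card + q ^ 3
      = 2 * (q + 1) + q ^ 4 := by
  classical
  have hσ4 : ∀ x, σ (σ (σ (σ x))) = x := by
    intro x
    rw [hσ, hσ, hσ, hσ, ← pow_mul, ← pow_mul, ← pow_mul]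
    convert FiniteField.pow_card x using 2
    rw [hK]; ring
  let F : K → K := fun x => x ^ d + (x + 1) ^ d
  let G := Finset.univ.filter fun x : K => Generic σ x
  let T := Finset.univ.filter fun b : K => b ^ (q + 1) = 1
  have hT : ∀ b, b ∈ T ↔ b * σ b = 1 := by
    intro b
    rw [Finset.mem_filter_univ, hσ, pow_succ']
  have himage : Finset.univ.image F = T ∪ G.image F := by
    ext b
    simp only [Finset.mem_union, Finset.mem_image, Finset.mem_univ, true_and, hT, G,
      Finset.mem_filter_univ]
    constructor
    · rintro ⟨x, rfl⟩
      by_cases hx : Generic σ x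
      · exact Or.inr ⟨x, hx, rfl⟩
      · exact Or.inl (mul_map_eq_one_of_not_generic hσ4 hd0 hd hx)
    · rintro (hb | ⟨x, -, hx⟩)
      · exact exists_eq_of_mul_map_eq_one hd0 hd hroot hb
      · exact ⟨x, hx⟩
  have hdisj : Disjoint T (G.image F) := by
    rw [Finset.disjoint_right]
    intro b hb hbT
    obtain ⟨x, hx, rfl⟩ := Finset.mem_image.1 hb
    exact ((Finset.mem_filter_univ _).1 hx).mul_map_ne_one hσ4 hd ((hT _).1 hbT)
  have hTcard : T.card = q + 1 := by
    refine card_pow_eq_one_of_dvd (by positivity) ?_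
    obtain ⟨r, rfl⟩ : ∃ r, q = r + 1 := ⟨q - 1, by omega⟩
    rw [hK]
    refine ⟨r * (r ^ 2 + 2 * r + 2), ?_⟩
    have : (r + 1) ^ 4 = (r + 1 + 1) * (r * (r ^ 2 + 2 * r + 2)) + 1 := by ring
    omega
  have hGcard : G.card = (G.image F).card * 2 := by
    rw [Finset.card_eq_sum_card_image F G]
    refine Finset.sum_const_nat fun b hb => ?_
    obtain ⟨x, hx, rfl⟩ := Finset.mem_image.1 hb
    rw [Finset.mem_filter_univ] at hx
    have : G.filter (fun y => F y = F x) = {x, x + 1} := by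
      ext y
      simp only [G, Finset.mem_filter, Finset.mem_univ, true_and, Finset.mem_insert,
        Finset.mem_singleton]
      constructor
      · rintro ⟨hy, hxy⟩
        exact hx.eq_or_eq_add_one hσ4 hd hy hxy.symm
      · rintro (rfl | rfl)
        · exact ⟨hx, rfl⟩
        · refine ⟨hx.add_one, ?_⟩
          change (x + 1) ^ d + (x + 1 + 1) ^ d = x ^ d + (x + 1) ^ d
          rw [add_assoc x, CharTwo.add_self_eq_zero, add_zero, add_comm]
    rw [this, Finset.card_pair (by simp)]
  have hsum : G.card + q ^ 3 = q ^ 4 := by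
    rw [← card_not_generic (σ := σ) hq hK hσ, ← hK]
    exact Finset.card_filter_add_card_filter_not _
  change 2 * (Finset.univ.image F).card + _ = _
  rw [himage, Finset.card_union_of_disjoint hdisj, hTcard]
  omega
end

/-- The number of `b ∈ 𝔽_{q⁴}` for which `x^d + (x+1)^d = b`,
`d = q³+q²+q-1`, has no solution is `(q³/2 - 1)(q+1)`. -/
theorem stmt17 (n : ℕ) (hn : 0 < n) (q : ℕ) (hq : q = 2 ^ n)
    (K : Type*) [Field K] [Fintype K] (hK : Fintype.card K = q ^ 4)
    (d : ℕ) (hd : d = q ^ 3 + q ^ 2 + q - 1) :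
    {b : K | ∀ x : K, x ^ d + (x + 1) ^ d ≠ b}.ncard
      = (q ^ 3 / 2 - 1) * (q + 1) := by
  classical
  have hchar : CharP K 2 := by
    rw [hq, ← pow_mul] at hK
    exact charP_of_card_eq_prime_pow hK
  obtain ⟨t, ht⟩ : ∃ t, q = 2 * t := ⟨2 ^ (n - 1), by rw [hq, ← pow_succ']; congr 1; omega⟩
  have ht0 : 0 < t := by
    have : 0 < q := by rw [hq]; positivity
    omega
  have hσ : ∀ x, iterateFrobenius K 2 n x = x ^ q := by
    intro x
    rw [iterateFrobenius_def, hq]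
  have hd2 : d + 2 = q ^ 3 + q ^ 2 + q + 1 := by omega
  have himage := card_image_eq (σ := iterateFrobenius K 2 n) (d := d) (by omega) hK hσ
    (by have := Nat.zero_le (q ^ 3 + q ^ 2); omega)
    (fun x => by
      simp only [hσ]
      rw [← pow_add, hd2]
      ring)
    (fun w hw => by
      refine exists_sq_add_self_eq (m := 2 * n) (by rw [hK, hq]; ring) ?_
      rw [hσ, hσ, ← pow_mul, hq, ← pow_add, ← two_mul] at hw
      exact hw)
  have hset : {b : K | ∀ x : K, x ^ d + (x + 1) ^ d ≠ b}
      = ((Finset.univ.image fun x : K => x ^ d + (x + 1) ^ d)ᶜ : Finset K) := by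
    ext b
    simp
  rw [hset, Set.ncard_coe_finset, Finset.card_compl, hK]
  have h3 : q ^ 3 / 2 = 4 * t ^ 3 := by
    rw [ht]
    have : (2 * t) ^ 3 = 2 * (4 * t ^ 3) := by ring
    omega
  obtain ⟨s, hs⟩ : ∃ s, 4 * t ^ 3 = s + 1 := ⟨4 * t ^ 3 - 1, by have := pow_pos ht0 3; omega⟩
  rw [h3, hs, Nat.add_sub_cancel]
  have e3 : q ^ 3 = 2 * (s + 1) := by rw [← hs, ht]; ring
  have e4 : q ^ 4 = q * (2 * (s + 1)) := by rw [← e3]; ring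
  have e5 : s * (q + 1) = s * q + s := by ring
  have e6 : q * (2 * (s + 1)) = 2 * (s * q) + 2 * q := by ring
  omega
end

section
/- Let $n$ be a positive integer, $q = 2^n$, and $d = q^3 + q^2 + q - 1$. The power function $F(x) = x^d$ on $\mathbb{F}_{q^4}$ has differential uniformity $q^2$, i.e., $\max_{a \neq 0, b} |\{x \in \mathbb{F}_{q^4} : F(x+a) + F(x) = b\}| = q^2$. -/
/-- In characteristic two, a set on which an additive map `ψ` is a nonzero constant and on which a
quadratic linearized polynomial takes values in `R` has at most as many elements as `R`. -/
theorem card_le_of_quadratic_mem_of_const {K : Type*} [Field K] [DecidableEq K] [CharP K 2]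
    (R : Finset K) (hadd : ∀ r ∈ R, ∀ s ∈ R, r + s ∈ R) (c m : K) (hc : c ≠ 0)
    (ψ : K →+ K) (e : K) (he : e ≠ 0) (T : Finset K)
    (hR : ∀ x ∈ T, c * x ^ 2 + m * x ∈ R) (hψ : ∀ x ∈ T, ψ x = e) :
    T.card ≤ R.card := by
  have h2 : (2 : K) = 0 := CharTwo.two_eq_zero
  rcases T.eq_empty_or_nonempty with rfl | ⟨x₀, hx₀⟩
  · simp
  have hdisj : Disjoint T (T.image (· + x₀)) := by
    rw [Finset.disjoint_left]
    intro x hx hx'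
    obtain ⟨y, hy, rfl⟩ := Finset.mem_image.1 hx'
    have h := hψ _ hx
    rw [map_add, hψ y hy, hψ x₀ hx₀, CharTwo.add_self_eq_zero] at h
    exact he h.symm
  have hcard : (T ∪ T.image (· + x₀)).card = 2 * T.card := by
    rw [Finset.card_union_of_disjoint hdisj,
      Finset.card_image_of_injective _ (add_left_injective x₀)]
    ring
  have hmap : ∀ x ∈ T ∪ T.image (· + x₀), c * x ^ 2 + m * x ∈ R := by
    intro x hx
    rcases Finset.mem_union.1 hx with hx | hx
    · exact hR x hx
    · obtain ⟨y, hy, rfl⟩ := Finset.mem_image.1 hx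
      have := hadd _ (hR y hy) _ (hR x₀ hx₀)
      convert this using 1
      linear_combination c * y * x₀ * h2
  have hfib : ∀ r ∈ R, ((T ∪ T.image (· + x₀)).filter
      (fun x => c * x ^ 2 + m * x = r)).card ≤ 2 := by
    intro r _
    rcases Finset.eq_empty_or_nonempty ((T ∪ T.image (· + x₀)).filter
      (fun x => c * x ^ 2 + m * x = r)) with h | ⟨y, hy⟩
    · rw [h, Finset.card_empty]
      exact Nat.zero_le 2
    · have hy := (Finset.mem_filter.1 hy).2
      refine (Finset.card_le_card (t := {y, -y - m / c}) ?_).trans Finset.card_le_two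
      intro x hx
      have hx := (Finset.mem_filter.1 hx).2
      have : (x - y) * (x - (-y - m / c)) = 0 := by
        field_simp
        linear_combination hx - hy
      rcases mul_eq_zero.1 this with h | h
      · simp [sub_eq_zero.1 h]
      · simp [sub_eq_zero.1 h]
  have := Finset.card_le_mul_card_image_of_maps_to hmap 2 hfib
  omega

/-- The defining equation of the derivative, with denominators cleared. -/
theorem derivative_eq_iff {K : Type*} [Field K] [CharP K 2] (σ : K →+* K) {d : ℕ}
    (hd : ∀ x : K, x * x ^ d = σ x * σ (σ x) * σ (σ (σ x))) {b x : K}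
    (hx : x ≠ 0) (hx1 : x + 1 ≠ 0) :
    (x + 1) ^ d + x ^ d = b ↔
      (b + 1) * (x ^ 2 + x) = (x + σ x + σ (σ x) + σ (σ (σ x))) * x +
        ((x + σ (σ x)) * (σ x * σ (σ (σ x))) + (σ x + σ (σ (σ x))) * (x * σ (σ x))) := by
  have h2 : (2 : K) = 0 := CharTwo.two_eq_zero
  have h0 := hd x
  have h1 := hd (x + 1)
  simp only [map_add, map_one] at h1
  generalize x ^ d = f at *
  generalize (x + 1) ^ d = g at *
  generalize σ (σ (σ x)) = w at *
  generalize σ (σ x) = z at *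
  generalize σ x = y at *
  constructor
  · rintro rfl
    grind
  · intro h
    have : x * (x + 1) * (g + f) = x * (x + 1) * b := by grind
    exact mul_left_cancel₀ (mul_ne_zero hx hx1) this

/-- If the trace and the third elementary symmetric function of the conjugates of `x` vanish, then
`x` is fixed by the square of `σ`. -/
theorem fixed_of_derivative_eq_one {K : Type*} [Field K] [CharP K 2] (σ : K →+* K)
    (hσ : ∀ x, σ (σ (σ (σ x))) = x) {x : K}
    (h : 0 = (x + σ x + σ (σ x) + σ (σ (σ x))) * x +
        ((x + σ (σ x)) * (σ x * σ (σ (σ x))) + (σ x + σ (σ (σ x))) * (x * σ (σ x)))) :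
    σ (σ x) = x := by
  have h2 : (2 : K) = 0 := CharTwo.two_eq_zero
  have hs := congrArg σ h
  simp only [map_add, map_mul, map_zero, hσ] at hs
  obtain ⟨y, hy⟩ : ∃ y, y = σ x := ⟨_, rfl⟩
  obtain ⟨z, hz⟩ : ∃ z, z = σ y := ⟨_, rfl⟩
  obtain ⟨w, hw⟩ : ∃ w, w = σ z := ⟨_, rfl⟩
  simp only [← hy, ← hz, ← hw] at h hs ⊢
  have hfix : y = x → z = x ∧ w = x := by
    intro hyx
    have hzx : z = x := by rw [hz, hyx, ← hy, hyx]
    exact ⟨hzx, by rw [hw, hzx, ← hy, hyx]⟩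
  have htr : x + y + z + w = 0 := by
    have : (x + y + z + w) * (x + y) = 0 := by grind
    rcases mul_eq_zero.1 this with h | h
    · exact h
    · obtain ⟨rfl, rfl⟩ := hfix (CharTwo.add_eq_zero.1 h).symm
      grind
  have h3 : (x + z) * (x * z + y * w) = 0 := by grind
  rcases mul_eq_zero.1 h3 with h | h
  · grind
  · have : (x + y) * (y + z) = 0 := by grind
    rcases mul_eq_zero.1 this with h | h
    · exact (hfix (CharTwo.add_eq_zero.1 h).symm).1
    · have hyz : z = y := (CharTwo.add_eq_zero.1 h).symm
      have hwz : w = z := by rw [hw, hyz, ← hz, hyz]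
      grind

/-- A trace-zero solution `x` of `c (x² + x) = B` with `B ≠ 0`, where `B` is the third elementary
symmetric function of the conjugates of `x`, has prescribed `(x + x^(σ²))²`; here `g = c⁻¹`. -/
theorem trace_zero_relation {K : Type*} [Field K] [CharP K 2] (σ : K →+* K)
    {x g B : K} (hB : B ≠ 0) (hfix : σ B = B)
    (hA : x + σ x + σ (σ x) + σ (σ (σ x)) = 0)
    (hBx : B = (x + σ (σ x)) * (σ x * σ (σ (σ x))) + (σ x + σ (σ (σ x))) * (x * σ (σ x)))
    (hx : x ^ 2 + x = g * B) :
    (g * σ (σ g) + σ g * σ (σ (σ g))) * (x + σ (σ x)) ^ 2 = 1 + g + σ (σ g) := by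
  have h2 : (2 : K) = 0 := CharTwo.two_eq_zero
  have hx1 := congrArg σ hx
  have hx2 := congrArg σ hx1
  have hx3 := congrArg σ hx2
  simp only [map_add, map_mul, map_pow, hfix] at hx1 hx2 hx3
  generalize σ (σ (σ g)) = g3 at *
  generalize σ (σ g) = g2 at *
  generalize σ g = g1 at *
  generalize σ (σ (σ x)) = w at *
  generalize σ (σ x) = z at *
  generalize σ x = y at *
  have hw : w = x + y + z := by grind
  subst hw
  obtain ⟨u, hu⟩ : ∃ u, u = x + z := ⟨_, rfl⟩
  obtain ⟨V, hV⟩ : ∃ V, V = x * z + y * (x + y + z) := ⟨_, rfl⟩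
  have hBu : B = u * V := by grind
  have hk : u ^ 2 + u = B * (g + g2) := by grind
  have hT : V ^ 2 + V * (u + 1) = B ^ 2 * (g * g2 + g1 * g3) := by
    have e1 : (x * z) ^ 2 + x * z * (u + 1) = B ^ 2 * (g * g2) := by
      have : (x ^ 2 + x) * (z ^ 2 + z) = (g * B) * (g2 * B) := by rw [hx, hx2]
      grind
    have e2 : (y * (x + y + z)) ^ 2 + y * (x + y + z) * (u + 1) = B ^ 2 * (g1 * g3) := by
      have : (y ^ 2 + y) * ((x + y + z) ^ 2 + (x + y + z)) = (g1 * B) * (g3 * B) := by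
        rw [hx1, hx3]
      grind
    grind
  rw [← hu]
  have hB2 : B ^ 2 ≠ 0 := pow_ne_zero 2 hB
  apply mul_left_cancel₀ hB2
  have : B ^ 2 * ((g * g2 + g1 * g3) * u ^ 2) = u ^ 2 * (V ^ 2 + V * (u + 1)) := by
    rw [hT]; ring
  rw [this]
  have : B ^ 2 * (1 + g + g2) = B ^ 2 + B * (u ^ 2 + u) := by rw [hk]; ring
  rw [this, hBu]
  ring

/-- The coefficient of `trace_zero_relation` and its right-hand side do not vanish together. -/
theorem trace_zero_coeff_ne_zero {K : Type*} [Field K] [CharP K 2] (σ : K →+* K)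
    {g : K} (h : g * σ (σ g) + σ g * σ (σ (σ g)) = 0) : 1 + g + σ (σ g) ≠ 0 := by
  have h2 : (2 : K) = 0 := CharTwo.two_eq_zero
  intro hk
  have hg2 : σ (σ g) = g + 1 := by grind
  have hg3 : σ (σ (σ g)) = σ g + 1 := by rw [hg2, map_add, map_one]
  rw [hg3, hg2] at h
  have : (g + σ g) * (g + σ g + 1) = 0 := by grind
  rcases mul_eq_zero.1 this with h | h
  · have h' : σ g = g := by grind
    rw [h', h'] at hg2
    simp at hg2
  · have h' : σ g = g + 1 := by grind
    rw [h', map_add, map_one, h'] at hg2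
    grind

open Finset in
/-- Solutions of the derivative equation with a given value on the right other than `1`. -/
theorem card_derivative_le {K : Type*} [Field K] [Fintype K] [DecidableEq K] [CharP K 2]
    (σ : K →+* K) (hσ : ∀ x, σ (σ (σ (σ x))) = x) (c : K) (hc : c ≠ 0) :
    (univ.filter fun x : K => x ^ 2 + x ≠ 0 ∧
      c * (x ^ 2 + x) = (x + σ x + σ (σ x) + σ (σ (σ x))) * x +
        ((x + σ (σ x)) * (σ x * σ (σ (σ x))) + (σ x + σ (σ (σ x))) * (x * σ (σ x)))).card ≤
      (univ.filter fun x : K => σ x = x).card * (univ.filter fun x : K => σ x = x).card := by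
  have h2 : (2 : K) = 0 := CharTwo.two_eq_zero
  set R := univ.filter fun x : K => σ x = x with hRdef
  have hadd : ∀ r ∈ R, ∀ s ∈ R, r + s ∈ R := by
    intro r hr s hs
    simp only [hRdef, mem_filter, mem_univ, true_and] at *
    rw [map_add, hr, hs]
  have hB : ∀ x, (x + σ (σ x)) * (σ x * σ (σ (σ x))) +
      (σ x + σ (σ (σ x))) * (x * σ (σ x)) ∈ R := by
    intro x
    simp only [hRdef, mem_filter, mem_univ, true_and, map_add, map_mul, hσ]
    ring
  refine Finset.card_le_mul_card_image_of_maps_to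
    (f := fun x => x + σ x + σ (σ x) + σ (σ (σ x))) ?_ _ ?_
  · intro x _
    simp only [hRdef, mem_filter, mem_univ, true_and, map_add, hσ]
    ring
  intro A _
  by_cases hA : A = 0
  · subst hA
    rcases Finset.eq_empty_or_nonempty (filter (fun x => x + σ x + σ (σ x) + σ (σ (σ x)) = 0)
      (univ.filter fun x : K => x ^ 2 + x ≠ 0 ∧
      c * (x ^ 2 + x) = (x + σ x + σ (σ x) + σ (σ (σ x))) * x +
        ((x + σ (σ x)) * (σ x * σ (σ (σ x))) +
          (σ x + σ (σ (σ x))) * (x * σ (σ x))))) with h | ⟨x₀, hx₀⟩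
    · simp [h]
    have key : ∀ x, x ^ 2 + x ≠ 0 → c * (x ^ 2 + x) =
        (x + σ x + σ (σ x) + σ (σ (σ x))) * x + ((x + σ (σ x)) * (σ x * σ (σ (σ x))) +
          (σ x + σ (σ (σ x))) * (x * σ (σ x))) → x + σ x + σ (σ x) + σ (σ (σ x)) = 0 →
        x + σ (σ x) ≠ 0 ∧ (c⁻¹ * σ (σ c⁻¹) + σ c⁻¹ * σ (σ (σ c⁻¹))) * (x + σ (σ x)) ^ 2
          = 1 + c⁻¹ + σ (σ c⁻¹) := by
      intro x hx hcx htr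
      rw [htr, zero_mul, zero_add] at hcx
      have hne := mul_ne_zero hc hx
      refine ⟨fun hu => ?_, ?_⟩
      · have hu' := congrArg σ hu
        simp only [map_add, map_zero] at hu'
        rw [hcx, hu, hu', zero_mul, zero_mul, add_zero] at hne
        exact hne rfl
      · refine trace_zero_relation σ (B := c * (x ^ 2 + x)) hne ?_ htr hcx ?_
        · rw [hcx]
          have := hB x
          rw [hRdef, mem_filter] at this
          exact this.2
        · field_simp
    simp only [mem_filter, mem_univ, true_and] at hx₀
    obtain ⟨hu₀, hT₀⟩ := key x₀ hx₀.1.1 hx₀.1.2 hx₀.2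
    refine card_le_of_quadratic_mem_of_const R hadd c c hc
      (AddMonoidHom.id K + (σ.comp σ : K →+* K).toAddMonoidHom) (x₀ + σ (σ x₀)) hu₀ _ ?_ ?_
    · intro x hx
      simp only [mem_filter, mem_univ, true_and] at hx
      have h := hx.1.2
      rw [hx.2, zero_mul, zero_add, mul_add] at h
      rw [h]
      exact hB x
    · intro x hx
      simp only [mem_filter, mem_univ, true_and] at hx
      obtain ⟨-, hT⟩ := key x hx.1.1 hx.1.2 hx.2
      change x + σ (σ x) = x₀ + σ (σ x₀)
      rw [← hT₀] at hT
      rcases mul_eq_mul_left_iff.1 hT with h | h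
      · exact CharTwo.sq_injective h
      · rw [h, zero_mul] at hT₀
        exact absurd hT₀.symm (trace_zero_coeff_ne_zero σ h)
  · refine card_le_of_quadratic_mem_of_const R hadd c (c + A) hc
      (AddMonoidHom.id K + σ.toAddMonoidHom + (σ.comp σ).toAddMonoidHom +
        (σ.comp (σ.comp σ)).toAddMonoidHom) A hA _ ?_ ?_
    · intro x hx
      simp only [mem_filter, mem_univ, true_and] at hx
      have h := hx.1.2
      rw [hx.2] at h
      have : c * x ^ 2 + (c + A) * x = (x + σ (σ x)) * (σ x * σ (σ (σ x))) +
          (σ x + σ (σ (σ x))) * (x * σ (σ x)) := by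
        linear_combination h + A * x * h2
      rw [this]
      exact hB x
    · intro x hx
      simp only [mem_filter, mem_univ, true_and] at hx
      exact hx.2

open Polynomial in
theorem card_filter_pow_eq_self_le {K : Type*} [Field K] [Fintype K] [DecidableEq K] {m : ℕ}
    (hm : 1 < m) : (Finset.univ.filter fun x : K => x ^ m = x).card ≤ m := by
  have hne : (X ^ m - X : K[X]) ≠ 0 := FiniteField.X_pow_card_sub_X_ne_zero K hm
  calc _ ≤ (X ^ m - X : K[X]).roots.toFinset.card := by
        refine Finset.card_le_card fun x hx => ?_
        simp only [Finset.mem_filter, Finset.mem_univ, true_and] at hx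
        simp [hne, hx]
    _ ≤ (X ^ m - X : K[X]).roots.card := Multiset.toFinset_card_le _
    _ ≤ (X ^ m - X : K[X]).natDegree := card_roots' _
    _ = m := FiniteField.X_pow_card_sub_X_natDegree_eq K hm

/-- The fixed points of an involutive ring endomorphism `τ` in characteristic two number at least
the square root of the order of the field. -/
theorem card_le_sq_card_fixed {K : Type*} [Field K] [Fintype K] [DecidableEq K] [CharP K 2]
    (τ : K →+* K) (hτ : ∀ x, τ (τ x) = x) :
    Fintype.card K ≤ (Finset.univ.filter fun x : K => τ x = x).card *
      (Finset.univ.filter fun x : K => τ x = x).card := by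
  refine Finset.card_le_mul_card_image_of_maps_to (f := fun x => x + τ x) ?_ _ ?_
  · intro x _
    simp [hτ, add_comm]
  · intro r _
    rcases Finset.eq_empty_or_nonempty (Finset.univ.filter fun x : K => x + τ x = r) with
      h | ⟨y, hy⟩
    · simp [h]
    · refine Finset.card_le_card_of_injOn (· - y) ?_ (sub_left_injective.injOn)
      intro x hx
      simp only [Finset.coe_filter, Finset.mem_filter, Finset.mem_univ, true_and,
        Set.mem_ofPred_eq] at hx hy ⊢
      have h2 : (2 : K) = 0 := CharTwo.two_eq_zero
      rw [map_sub]
      linear_combination hx - hy - (x - y) * h2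

theorem ncard_derivative_scale {K : Type*} [Field K] {d : ℕ} {a : K} (b : K) (ha : a ≠ 0) :
    {x : K | (x + a) ^ d + x ^ d = b}.ncard =
      {x : K | (x + 1) ^ d + x ^ d = b / a ^ d}.ncard := by
  rw [← Set.ncard_image_of_injective {x : K | (x + 1) ^ d + x ^ d = b / a ^ d}
    (mul_right_injective₀ ha)]
  congr 1
  ext x
  simp only [Set.mem_ofPred_eq, Set.mem_image]
  have hscale : ∀ y : K, (a * y + a) ^ d + (a * y) ^ d = a ^ d * ((y + 1) ^ d + y ^ d) := by
    intro y
    rw [show a * y + a = a * (y + 1) by ring, mul_pow, mul_pow]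
    ring
  have had : a ^ d ≠ 0 := pow_ne_zero d ha
  constructor
  · intro h
    refine ⟨x / a, ?_, mul_div_cancel₀ x ha⟩
    have := hscale (x / a)
    rw [mul_div_cancel₀ x ha, h] at this
    rw [this, mul_div_cancel_left₀ _ had]
  · rintro ⟨y, hy, rfl⟩
    rw [hscale, hy, mul_div_cancel₀ _ had]

/-- The power map `x ↦ x^d`, `d = q³+q²+q-1`, on `𝔽_{q⁴}` has differential
uniformity `q²`: the maximum over `a ≠ 0`, `b` of the number of solutions of
`(x+a)^d + x^d = b` is `q²`. -/
theorem stmt18 (n : ℕ) (hn : 0 < n) (q : ℕ) (hq : q = 2 ^ n)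
    (K : Type*) [Field K] [Fintype K] (hK : Fintype.card K = q ^ 4)
    (d : ℕ) (hd : d = q ^ 3 + q ^ 2 + q - 1) :
    IsGreatest {m : ℕ | ∃ a b : K, a ≠ 0 ∧
        {x : K | (x + a) ^ d + x ^ d = b}.ncard = m} (q ^ 2) := by
  classical
  have hq1 : 1 < q := hq ▸ Nat.one_lt_two_pow hn.ne'
  have : Fact (Nat.Prime 2) := ⟨Nat.prime_two⟩
  have : CharP K 2 := by
    refine charP_of_card_eq_prime_pow (f := n * 4) ?_
    rw [hK, hq, pow_mul]
  have h2 : (2 : K) = 0 := CharTwo.two_eq_zero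
  obtain ⟨σ, hσq⟩ : ∃ σ : K →+* K, ∀ x, σ x = x ^ q :=
    ⟨iterateFrobenius K 2 n, fun x => by rw [iterateFrobenius_def, hq]⟩
  have hσ : ∀ x, σ (σ (σ (σ x))) = x := by
    intro x
    simp only [hσq, ← pow_mul]
    rw [show q * q * q * q = Fintype.card K by rw [hK]; ring, FiniteField.pow_card]
  have hσσ : ∀ x, σ (σ x) = x ^ q ^ 2 := by
    intro x
    simp only [hσq, ← pow_mul, sq]
  have hd0 : d ≠ 0 := by
    have := Nat.pos_of_ne_zero (pow_ne_zero 2 (by omega : q ≠ 0))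
    omega
  have hdx : ∀ x : K, x * x ^ d = σ x * σ (σ x) * σ (σ (σ x)) := by
    intro x
    simp only [hσq, ← pow_mul, ← pow_add, ← pow_succ']
    congr 1
    have : q * q * q = q ^ 3 := by ring
    have : q * q = q ^ 2 := by ring
    omega
  have hfix : (Finset.univ.filter fun x : K => σ x = x).card ≤ q := by
    simpa only [hσq] using card_filter_pow_eq_self_le (K := K) hq1
  have hone : {x : K | (x + 1) ^ d + x ^ d = 1}.ncard = q ^ 2 := by
    have hset : {x : K | (x + 1) ^ d + x ^ d = 1} =
        ((Finset.univ.filter fun x : K => σ (σ x) = x : Finset K) : Set K) := by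
      ext x
      simp only [Set.mem_ofPred_eq, Finset.coe_filter, Finset.mem_univ, true_and]
      by_cases hx : x = 0
      · simp [hx, hd0]
      by_cases hx1 : x + 1 = 0
      · have : x = 1 := by rw [← CharTwo.add_eq_zero, hx1]
        simp [this, hd0, CharTwo.add_self_eq_zero]
      rw [derivative_eq_iff σ hdx hx hx1, CharTwo.add_self_eq_zero, zero_mul]
      refine ⟨fixed_of_derivative_eq_one σ hσ, fun h => ?_⟩
      rw [h]
      linear_combination (-(x ^ 2 + σ x * x) - x * (σ x ^ 2) - σ x * x ^ 2) * h2
    rw [hset, Set.ncard_coe_finset]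
    refine le_antisymm ?_ ?_
    · simpa only [hσσ] using card_filter_pow_eq_self_le (K := K) (Nat.one_lt_pow two_ne_zero hq1)
    · have := card_le_sq_card_fixed (σ.comp σ) (fun x => hσ x)
      rw [hK, show q ^ 4 = q ^ 2 * q ^ 2 by ring] at this
      exact Nat.mul_self_le_mul_self_iff.1 this
  refine ⟨⟨1, 1, one_ne_zero, hone⟩, ?_⟩
  rintro m ⟨a, b, ha, rfl⟩
  rw [ncard_derivative_scale b ha]
  generalize b / a ^ d = b
  by_cases hb : b = 1
  · rw [hb, hone]
  have hc : b + 1 ≠ 0 := fun h => hb (CharTwo.add_eq_zero.1 h)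
  refine le_trans ?_ ((card_derivative_le σ hσ (b + 1) hc).trans
    ((Nat.mul_le_mul hfix hfix).trans (sq q).ge))
  rw [← Set.ncard_coe_finset]
  refine Set.ncard_le_ncard ?_ (Finset.finite_toSet _)
  intro x hx
  simp only [Set.mem_ofPred_eq, Finset.coe_filter, Finset.mem_univ, true_and] at hx ⊢
  have hx0 : x ≠ 0 := by
    rintro rfl
    simp [hd0] at hx
    exact hb hx.symm
  have hx1 : x + 1 ≠ 0 := by
    intro h
    have : x = 1 := by rw [← CharTwo.add_eq_zero, h]
    rw [this] at hx
    simp [hd0, CharTwo.add_self_eq_zero] at hx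
    exact hb hx.symm
  refine ⟨?_, (derivative_eq_iff σ hdx hx0 hx1).1 hx⟩
  rw [show x ^ 2 + x = x * (x + 1) by ring]
  exact mul_ne_zero hx0 hx1
end
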